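/- Let j : ℝ × ℝ³ → ℝ⁴, written j = (j⁰, j¹, j², j³), be continuously differentiable with spatially compact support (there is a compact K ⊂ ℝ³ with j(t, 𝐱) = 0 for 𝐱 ∉ K), and suppose j satisfies the continuity equation ∂_t j⁰ + Σ_{k=1}^{3} ∂_{x^k} j^k = 0 everywhere. Then for every smooth bounded function τ : ℝ³ → ℝ with sup_{𝐱} |∇τ(𝐱)| ≤ 1 and every c ∈ ℝ, the flux through the graph of τ equals the flux through the hyperplane t = c: ∫_{ℝ³} ( j⁰(τ(𝐱), 𝐱) − Σ_{k=1}^{3} j^k(τ(𝐱), 𝐱) ∂_k τ(𝐱) ) d𝐱 = ∫_{ℝ³} j⁰(c, 𝐱) d𝐱. -/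

import Mathlib

open MeasureTheory

/-- The coordinate direction in space-time `ℝ × ℝ³` corresponding to the
index `μ ∈ {0,1,2,3}`: the time direction for `μ = 0`, the `k`-th spatial
unit vector for `μ = k ∈ {1,2,3}`. -/
noncomputable def dir4 (μ : Fin 4) : ℝ × (Fin 3 → ℝ) :=
  if h : μ = 0 then (1, 0) else (0, Pi.single (μ.pred h) 1)

/-!
For a density `ρ` and a spatial current `J`, integrate `J` in time from the hyperplane `t = c` up to
the graph of `τ`: the spatial vector field `G x = ∫ t in c..τ x, J (t, x)` is `C¹` with compact
support, so `∫ div G = 0`. By the Leibniz rule `div G = dτ (J (τ, ·)) + ∫ t in c..τ, div J (t, ·)`,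
and the continuity equation `div J = -∂ₜρ` turns the last integral into `ρ (c, ·) - ρ (τ, ·)`. Hence
`-div G` is the difference of the flux densities through the two surfaces.
-/

open scoped Interval Topology

section ParametricIntegral

lemma exists_eventually_forall_norm_le_of_isCompact {T X G : Type*} [TopologicalSpace T]
    [TopologicalSpace X] [SeminormedAddCommGroup G] {g : T → X → G} (hg : Continuous ↿g)
    {S : Set T} (hS : IsCompact S) (x₀ : X) :
    ∃ C, ∀ᶠ x in 𝓝 x₀, ∀ t ∈ S, ‖g t x‖ ≤ C := by
  have hg_slice : Continuous fun t => g t x₀ := hg.comp (.prodMk_left x₀)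
  obtain ⟨C, hC⟩ := hS.exists_bound_of_continuousOn hg_slice.continuousOn
  refine ⟨C + 1, hS.eventually_forall_of_forall_eventually fun t ht => ?_⟩
  have hg_swap : Continuous fun p : X × T => ‖g p.2 p.1‖ := (hg.comp continuous_swap).norm
  have hlt : ‖g t x₀‖ < C + 1 := (hC t ht).trans_lt (lt_add_one C)
  exact (hg_swap.continuousAt.eventually_lt continuousAt_const hlt).mono fun _ => le_of_lt

variable {E F : Type*} [NormedAddCommGroup E] [NormedSpace ℝ E]
  [NormedAddCommGroup F] [NormedSpace ℝ F]
  {f : ℝ → E → F} {f' : ℝ → E → E →L[ℝ] F}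

lemma hasFDerivAt_intervalIntegral_of_continuous (hf : Continuous ↿f) (hf' : Continuous ↿f')
    (hff' : ∀ t x, HasFDerivAt (f t) (f' t x) x) (a b : ℝ) (x₀ : E) :
    HasFDerivAt (fun x => ∫ t in a..b, f t x) (∫ t in a..b, f' t x₀) x₀ := by
  have hf_slice (x : E) : Continuous fun t => f t x := hf.comp (.prodMk_left x)
  have hf'_slice : Continuous fun t => f' t x₀ := hf'.comp (.prodMk_left x₀)
  obtain ⟨C, hC⟩ := exists_eventually_forall_norm_le_of_isCompact hf' isCompact_uIcc x₀
  exact intervalIntegral.hasFDerivAt_integral_of_dominated_of_fderiv_le hC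
    (.of_forall fun x => (hf_slice x).aestronglyMeasurable)
    ((hf_slice x₀).intervalIntegrable a b) hf'_slice.aestronglyMeasurable
    (.of_forall fun t ht _ hx => hx t (Set.uIoc_subset_uIcc ht)) intervalIntegrable_const
    (.of_forall fun t _ x _ => hff' t x)

lemma continuous_fderiv_slice {g : ℝ × E → F} (hg : ContDiff ℝ 1 g) :
    Continuous fun p : ℝ × E => fderiv ℝ (fun y => g (p.1, y)) p.2 := by
  have hg_curried : ContDiff ℝ 1 fun q : (ℝ × E) × E => g (q.1.1, q.2) := by fun_prop
  exact (ContDiff.fderiv (n := 0) hg_curried contDiff_snd (by simp)).continuous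

variable [CompleteSpace F]

lemma hasStrictFDerivAt_parametric_primitive (hf : Continuous ↿f) (hf' : Continuous ↿f')
    (hff' : ∀ t x, HasFDerivAt (f t) (f' t x) x) (a b : ℝ) (x : E) :
    HasStrictFDerivAt (fun p : ℝ × E => ∫ t in a..p.1, f t p.2)
      ((ContinuousLinearMap.toSpanSingleton ℝ (f b x)).coprod (∫ t in a..b, f' t x)) (b, x) := by
  have hf_slice (x : E) : Continuous fun t => f t x := hf.comp (.prodMk_left x)
  have hf'_primitive : Continuous fun p : ℝ × E => ∫ t in a..p.1, f' t p.2 :=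
    (intervalIntegral.continuous_parametric_primitive_of_continuous
      (f := fun x t => f' t x) (hf'.comp continuous_swap)).comp continuous_swap
  exact hasStrictFDerivAt_uncurry_coprod (u := (b, x))
    (f := fun s y => ∫ t in a..s, f t y)
    (f₁ := fun s y => ContinuousLinearMap.toSpanSingleton ℝ (f s y))
    (f₂ := fun s y => ∫ t in a..s, f' t y)
    (.of_forall fun p => ((hf_slice p.2).integral_hasStrictDerivAt a p.1).hasDerivAt.hasFDerivAt)
    (.of_forall fun p => hasFDerivAt_intervalIntegral_of_continuous hf hf' hff' a p.1 p.2)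
    ((ContinuousLinearMap.toSpanSingletonCLE (𝕜 := ℝ) (E := F)).continuous.comp hf).continuousAt
    hf'_primitive.continuousAt

lemma hasFDerivAt_intervalIntegral_upper (hf : Continuous ↿f) (hf' : Continuous ↿f')
    (hff' : ∀ t x, HasFDerivAt (f t) (f' t x) x) {τ : E → ℝ} {τ' : E →L[ℝ] ℝ} {x : E}
    (hτ : HasFDerivAt τ τ' x) (a : ℝ) :
    HasFDerivAt (fun y => ∫ t in a..τ y, f t y)
      (τ'.smulRight (f (τ x) x) + ∫ t in a..τ x, f' t x) x := by
  have hprimitive :=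
    (hasStrictFDerivAt_parametric_primitive hf hf' hff' a (τ x) x).hasFDerivAt
  have hgraph : HasFDerivAt (fun y => (τ y, y)) (τ'.prod (.id ℝ E)) x :=
    hτ.prodMk (hasFDerivAt_id x)
  refine (hprimitive.comp (f := fun y => (τ y, y)) x hgraph).congr_fderiv ?_
  ext v
  simp

end ParametricIntegral

section Divergence

variable {E : Type*} [NormedAddCommGroup E] [NormedSpace ℝ E] [FiniteDimensional ℝ E]

/-- The trace of continuous endomorphisms of a finite-dimensional space, as a continuous linear
form, so that it commutes with integrals. -/
noncomputable def traceCLM (E : Type*) [NormedAddCommGroup E] [NormedSpace ℝ E]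
    [FiniteDimensional ℝ E] : (E →L[ℝ] E) →L[ℝ] ℝ :=
  (LinearMap.trace ℝ E ∘ₗ ContinuousLinearMap.coeLM ℝ).toContinuousLinearMap

@[simp]
lemma traceCLM_apply (A : E →L[ℝ] E) : traceCLM E A = LinearMap.trace ℝ E A := rfl

lemma traceCLM_smulRight (φ : E →L[ℝ] ℝ) (v : E) : traceCLM E (φ.smulRight v) = φ v :=
  LinearMap.trace_smulRight (φ : E →ₗ[ℝ] ℝ) v

/-- The divergence of a vector field, defined without coordinates as the trace of its derivative;
`divergence_pi` is the formula in coordinates. It is `0` where the field is not differentiable. -/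
noncomputable def divergence (F : E → E) (x : E) : ℝ := traceCLM E (fderiv ℝ F x)

lemma divergence_pi {ι : Type*} [Fintype ι] [DecidableEq ι] {F : (ι → ℝ) → ι → ℝ} {x : ι → ℝ}
    (hF : DifferentiableAt ℝ F x) :
    divergence F x = ∑ i, fderiv ℝ (fun y => F y i) x (Pi.single i 1) := by
  rw [divergence, traceCLM_apply, LinearMap.trace_eq_matrix_trace ℝ (Pi.basisFun ℝ ι)]
  simp [Matrix.trace, fderiv_apply hF]

variable [MeasurableSpace E] [BorelSpace E] {μ : Measure E} [μ.IsAddHaarMeasure]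

lemma integral_fderiv_eq_zero {F : Type*} [NormedAddCommGroup F] [NormedSpace ℝ F]
    {g : E → F} (hg : Differentiable ℝ g) (hg_int : Integrable g μ)
    (hg'_int : Integrable (fderiv ℝ g) μ) : ∫ x, fderiv ℝ g x ∂μ = 0 := by
  ext v
  have hparts := integral_smul_fderiv_eq_neg_fderiv_smul_of_integrable (μ := μ)
    (f := fun _ : E => (1 : ℝ)) (g := g) (v := v) (by simp)
    (by simpa using hg'_int.apply_continuousLinearMap v) (by simpa using hg_int)
    (fun _ _ => differentiableAt_const _) (fun x _ => hg x)
  simpa [ContinuousLinearMap.integral_apply hg'_int] using hparts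

lemma integral_divergence_eq_zero {F : E → E} (hF : ContDiff ℝ 1 F)
    (hF_supp : HasCompactSupport F) : ∫ x, divergence F x ∂μ = 0 := by
  have hF_int : Integrable F μ := hF.continuous.integrable_of_hasCompactSupport hF_supp
  have hF'_int : Integrable (fderiv ℝ F) μ :=
    (hF.continuous_fderiv one_ne_zero).integrable_of_hasCompactSupport (hF_supp.fderiv ℝ)
  calc ∫ x, divergence F x ∂μ = traceCLM E (∫ x, fderiv ℝ F x ∂μ) :=
        (traceCLM E).integral_comp_comm hF'_int
    _ = 0 := by
        rw [integral_fderiv_eq_zero (hF.differentiable one_ne_zero) hF_int hF'_int, map_zero]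

end Divergence

section Flux

variable {E : Type*} [NormedAddCommGroup E] [NormedSpace ℝ E]
  {ρ : ℝ × E → ℝ} {J : ℝ × E → E} {τ : E → ℝ}

/-- The density, with respect to the measure on space, of the flux of the current with components
`ρ` and `J` through the graph of `τ`; this is the integrand of `F(τ)`. -/
noncomputable def graphFluxDensity (ρ : ℝ × E → ℝ) (J : ℝ × E → E) (τ : E → ℝ) (x : E) : ℝ :=
  ρ (τ x, x) - fderiv ℝ τ x (J (τ x, x))

/-- The spatial current `J` accumulated at each point of space between the hyperplane `t = c` and
the graph of `τ`. -/
noncomputable def accumulatedCurrent (J : ℝ × E → E) (c : ℝ) (τ : E → ℝ) (x : E) : E :=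
  ∫ t in c..τ x, J (t, x)

lemma continuous_graphFluxDensity (hρ : Continuous ρ) (hJ : Continuous J) (hτ : ContDiff ℝ 1 τ) :
    Continuous (graphFluxDensity ρ J τ) := by
  have hgraph : Continuous fun x => (τ x, x) := hτ.continuous.prodMk continuous_id
  exact (hρ.comp hgraph).sub
    ((hτ.continuous_fderiv one_ne_zero).clm_apply (hJ.comp hgraph))

lemma hasFDerivAt_accumulatedCurrent [CompleteSpace E] (hJ : ContDiff ℝ 1 J)
    (hτ : Differentiable ℝ τ) (c : ℝ) (x : E) :
    HasFDerivAt (accumulatedCurrent J c τ)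
      ((fderiv ℝ τ x).smulRight (J (τ x, x)) + ∫ t in c..τ x, fderiv ℝ (fun y => J (t, y)) x)
      x := by
  have hJ_slice (t : ℝ) : Differentiable ℝ fun y => J (t, y) :=
    (hJ.differentiable one_ne_zero).comp (by fun_prop)
  exact hasFDerivAt_intervalIntegral_upper (f := fun t y => J (t, y)) hJ.continuous
    (continuous_fderiv_slice hJ) (fun t y => (hJ_slice t y).hasFDerivAt) (hτ x).hasFDerivAt c

lemma contDiff_accumulatedCurrent [CompleteSpace E] (hJ : ContDiff ℝ 1 J) (hτ : ContDiff ℝ 1 τ)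
    (c : ℝ) : ContDiff ℝ 1 (accumulatedCurrent J c τ) := by
  have hG := hasFDerivAt_accumulatedCurrent hJ (hτ.differentiable one_ne_zero) c
  refine contDiff_one_iff_hasFDerivAt.2 ⟨_, ?_, hG⟩
  have hboundary : Continuous fun x => (fderiv ℝ τ x).smulRight (J (τ x, x)) :=
    ((ContinuousLinearMap.smulRightL ℝ E E).continuous.comp
      (hτ.continuous_fderiv one_ne_zero)).clm_apply
      (hJ.continuous.comp (hτ.continuous.prodMk continuous_id))
  have hbulk : Continuous fun x => ∫ t in c..τ x, fderiv ℝ (fun y => J (t, y)) x :=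
    (intervalIntegral.continuous_parametric_primitive_of_continuous
      (f := fun x t => fderiv ℝ (fun y => J (t, y)) x)
      ((continuous_fderiv_slice hJ).comp continuous_swap)).comp
      (continuous_id.prodMk hτ.continuous)
  exact hboundary.add hbulk

variable [FiniteDimensional ℝ E]

/-- The continuity equation `∂ₜρ + div J = 0`, which includes the differentiability of `ρ` in
time. -/
def ContinuityEquation (ρ : ℝ × E → ℝ) (J : ℝ × E → E) : Prop :=
  ∀ t x, HasDerivAt (fun s => ρ (s, x)) (-divergence (fun y => J (t, y)) x) t

lemma integral_divergence_slice (hJ : ContDiff ℝ 1 J) (hcont : ContinuityEquation ρ J) (a b : ℝ)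
    (x : E) : ∫ t in a..b, divergence (fun y => J (t, y)) x = ρ (a, x) - ρ (b, x) := by
  have hdiv : Continuous fun t => divergence (fun y => J (t, y)) x :=
    (traceCLM E).continuous.comp ((continuous_fderiv_slice hJ).comp (.prodMk_left x))
  have hftc := intervalIntegral.integral_eq_sub_of_hasDerivAt (a := a) (b := b)
    (fun t _ => hcont t x) (hdiv.neg.intervalIntegrable a b)
  rw [intervalIntegral.integral_neg] at hftc
  linarith

lemma divergence_accumulatedCurrent (hJ : ContDiff ℝ 1 J) (hcont : ContinuityEquation ρ J)
    (hτ : Differentiable ℝ τ) (c : ℝ) (x : E) :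
    divergence (accumulatedCurrent J c τ) x = ρ (c, x) - graphFluxDensity ρ J τ x := by
  have hJ'_int : IntervalIntegrable (fun t => fderiv ℝ (fun y => J (t, y)) x) volume c (τ x) :=
    ((continuous_fderiv_slice hJ).comp (.prodMk_left x)).intervalIntegrable _ _
  calc divergence (accumulatedCurrent J c τ) x
      = fderiv ℝ τ x (J (τ x, x)) + ∫ t in c..τ x, divergence (fun y => J (t, y)) x := by
        rw [divergence, (hasFDerivAt_accumulatedCurrent hJ hτ c x).fderiv, map_add,
          traceCLM_smulRight, ← (traceCLM E).intervalIntegral_comp_comm hJ'_int]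
        rfl
    _ = ρ (c, x) - graphFluxDensity ρ J τ x := by
        rw [integral_divergence_slice hJ hcont, graphFluxDensity]
        ring

theorem continuity_implies_flux_through_cauchy_surface_general
    [MeasurableSpace E] [BorelSpace E] (μ : Measure E) [μ.IsAddHaarMeasure]
    (hρ : Continuous ρ) (hJ : ContDiff ℝ 1 J) {K : Set E} (hK : IsCompact K)
    (hρ_supp : ∀ t, ∀ x ∉ K, ρ (t, x) = 0) (hJ_supp : ∀ t, ∀ x ∉ K, J (t, x) = 0)
    (hcont : ContinuityEquation ρ J) (hτ : ContDiff ℝ 1 τ) (c : ℝ) :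
    ∫ x, graphFluxDensity ρ J τ x ∂μ = ∫ x, ρ (c, x) ∂μ := by
  have hflux_int : Integrable (graphFluxDensity ρ J τ) μ :=
    (continuous_graphFluxDensity hρ hJ.continuous hτ).integrable_of_hasCompactSupport
      (.intro hK fun x hx => by simp [graphFluxDensity, hρ_supp _ x hx, hJ_supp _ x hx])
  have hρ_int : Integrable (fun x => ρ (c, x)) μ :=
    (hρ.comp (.prodMk_right c)).integrable_of_hasCompactSupport (.intro hK (hρ_supp c))
  have hG_supp : HasCompactSupport (accumulatedCurrent J c τ) :=
    .intro hK fun x hx => by simp [accumulatedCurrent, hJ_supp _ x hx]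
  have hdiv : ∫ x, (ρ (c, x) - graphFluxDensity ρ J τ x) ∂μ = 0 := by
    simp_rw [← divergence_accumulatedCurrent hJ hcont (hτ.differentiable one_ne_zero)]
    exact integral_divergence_eq_zero (contDiff_accumulatedCurrent hJ hτ c) hG_supp
  rw [integral_sub hρ_int hflux_int] at hdiv
  exact (sub_eq_zero.1 hdiv).symm

end Flux

section Coordinates

variable {j : ℝ × (Fin 3 → ℝ) → Fin 4 → ℝ}

lemma continuityEquation_of_sum_fderiv_dir4 (hj : ContDiff ℝ 1 j)
    (hcont : ∀ p, ∑ μ, fderiv ℝ (fun q => j q μ) p (dir4 μ) = 0) :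
    ContinuityEquation (fun p => j p 0) (fun p k => j p k.succ) := by
  intro t x
  have hj_diff (μ : Fin 4) :
      HasFDerivAt (fun q => j q μ) (fderiv ℝ (fun q => j q μ) (t, x)) (t, x) :=
    ((contDiff_pi.1 hj μ).differentiable one_ne_zero _).hasFDerivAt
  have htime : HasDerivAt (fun s => j (s, x) 0) (fderiv ℝ (fun q => j q 0) (t, x) (dir4 0)) t := by
    have hline : HasDerivAt (fun s => (s, x)) (dir4 0) t := by
      simpa [dir4] using (hasDerivAt_id t).prodMk (hasDerivAt_const t x)
    exact (hj_diff 0).comp_hasDerivAt t hline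
  have hspace (k : Fin 3) :
      HasFDerivAt (fun y => j (t, y) k.succ)
        ((fderiv ℝ (fun q => j q k.succ) (t, x)).comp (.inr ℝ ℝ (Fin 3 → ℝ))) x :=
    (hj_diff k.succ).comp x (hasFDerivAt_prodMk_right t x)
  have hdiv : divergence (fun y k => j (t, y) k.succ) x =
      ∑ k : Fin 3, fderiv ℝ (fun q => j q k.succ) (t, x) (dir4 k.succ) := by
    rw [divergence_pi (differentiableAt_pi.2 fun k => (hspace k).differentiableAt)]
    simp [(hspace _).fderiv, dir4]
  convert htime using 1
  rw [hdiv, neg_eq_iff_add_eq_zero, add_comm, ← Fin.sum_univ_succ (M := ℝ)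
    (fun μ => fderiv ℝ (fun q => j q μ) (t, x) (dir4 μ))]
  exact hcont (t, x)

lemma graphFluxDensity_pi {ι : Type*} [Fintype ι] [DecidableEq ι] (ρ : ℝ × (ι → ℝ) → ℝ)
    (J : ℝ × (ι → ℝ) → ι → ℝ) (τ : (ι → ℝ) → ℝ) (x : ι → ℝ) :
    graphFluxDensity ρ J τ x =
      ρ (τ x, x) - ∑ k, J (τ x, x) k * fderiv ℝ τ x (Pi.single k 1) := by
  have hgrad (v : ι → ℝ) : fderiv ℝ τ x v = ∑ k, v k * fderiv ℝ τ x (Pi.single k 1) := by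
    conv_lhs => rw [← (Pi.basisFun ℝ ι).sum_repr v]
    simp only [map_sum, map_smul, Pi.basisFun_repr, Pi.basisFun_apply, smul_eq_mul]
  rw [graphFluxDensity, hgrad]

end Coordinates

/-- Let `j : ℝ × ℝ³ → ℝ⁴` be a continuously differentiable
current with spatially compact support satisfying the continuity equation
`∂_t j⁰ + Σ_k ∂_{x^k} j^k = 0`. Then for every smooth bounded `τ : ℝ³ → ℝ`
with Euclidean gradient norm everywhere `≤ 1` and every `c ∈ ℝ`, the flux
through the graph of `τ` equals the flux through the hyperplane `t = c`. -/
theorem continuity_implies_flux_through_cauchy_surface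
    (j : ℝ × (Fin 3 → ℝ) → Fin 4 → ℝ)
    (hj : ContDiff ℝ 1 j)
    (K : Set (Fin 3 → ℝ)) (hK : IsCompact K)
    (hsupp : ∀ t x, x ∉ K → j (t, x) = 0)
    (hcont : ∀ p, ∑ μ, fderiv ℝ (fun q => j q μ) p (dir4 μ) = 0)
    (τ : (Fin 3 → ℝ) → ℝ)
    (hτsmooth : ContDiff ℝ (⊤ : ℕ∞) τ)
    (hτbdd : ∃ M : ℝ, ∀ x, |τ x| ≤ M)
    (hτgrad : ∀ x, Real.sqrt (∑ k : Fin 3, (fderiv ℝ τ x (Pi.single k 1)) ^ 2) ≤ 1)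
    (c : ℝ) :
    ∫ x, (j (τ x, x) 0
        - ∑ k : Fin 3, j (τ x, x) k.succ * fderiv ℝ τ x (Pi.single k 1))
      = ∫ x, j (c, x) 0 := by
  simp_rw [← graphFluxDensity_pi (fun p => j p 0) (fun p k => j p k.succ) τ]
  exact continuity_implies_flux_through_cauchy_surface_general volume
    (contDiff_pi.1 hj 0).continuous (contDiff_pi.2 fun k => contDiff_pi.1 hj k.succ) hK
    (fun t x hx => by simp [hsupp t x hx]) (fun t x hx => by ext; simp [hsupp t x hx])
    (continuityEquation_of_sum_fderiv_dir4 hj hcont) (hτsmooth.of_le (by exact_mod_cast le_top)) c
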